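/- arXiv:2201.05935 — 3 statements merged into one kernel-verified Lean document; each statement's English description precedes it below -/
import Mathlib

section
/- Let H₀ be a p×p real matrix and let U, V be p×q real matrices (q ≤ p) such that VᵀV is invertible. Define H* = H₀(I_p − V(VᵀV)⁻¹Vᵀ) + U(VᵀV)⁻¹Vᵀ. Then H* satisfies the multiple secant condition H*V = U, and H* minimizes the Frobenius distance to H₀ among all matrices satisfying this condition: for every p×p matrix H with HV = U, ‖H* − H₀‖_F ≤ ‖H − H₀‖_F. -/
open Matrix

/-- Frobenius norm of a real matrix. -/
noncomputable def frob {m n : ℕ} (A : Matrix (Fin m) (Fin n) ℝ) : ℝ :=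
  Real.sqrt (∑ i, ∑ j, (A i j) ^ 2)

theorem frob_le_of_orth {m n : ℕ} (D E : Matrix (Fin m) (Fin n) ℝ) (h : D * Eᵀ = 0) :
    frob E ≤ frob (D + E) := by
  unfold frob
  apply Real.sqrt_le_sqrt
  apply Finset.sum_le_sum
  intro i _
  have h1 : ∑ j, D i j * E i j = 0 := by
    have := congrFun (congrFun h i) i
    simpa [Matrix.mul_apply] using this
  have h2 : ∑ j, ((D + E) i j) ^ 2
      = ∑ j, (D i j) ^ 2 + 2 * ∑ j, D i j * E i j + ∑ j, (E i j) ^ 2 := by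
    rw [Finset.mul_sum, ← Finset.sum_add_distrib, ← Finset.sum_add_distrib]
    apply Finset.sum_congr rfl
    intro j _
    rw [Matrix.add_apply]
    ring
  have h3 : 0 ≤ ∑ j, (D i j) ^ 2 := Finset.sum_nonneg fun j _ => sq_nonneg _
  rw [h2, h1]
  linarith

/-- the BQN update solves the constrained minimization problem.
For `H₀ : p×p`, `U, V : p×q` (`q ≤ p`) with `VᵀV` invertible, the matrix
`H* = H₀(I − V(VᵀV)⁻¹Vᵀ) + U(VᵀV)⁻¹Vᵀ` satisfies the multiple secant condition `H*V = U`
and minimizes `‖H − H₀‖_F` among all `H` with `HV = U`. -/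
theorem stmt_11 {p q : ℕ} (hq : q ≤ p)
    (H₀ : Matrix (Fin p) (Fin p) ℝ) (U V : Matrix (Fin p) (Fin q) ℝ)
    (hV : IsUnit (Vᵀ * V))
    (Hstar : Matrix (Fin p) (Fin p) ℝ)
    (hHstar : Hstar = H₀ * (1 - V * (Vᵀ * V)⁻¹ * Vᵀ) + U * (Vᵀ * V)⁻¹ * Vᵀ) :
    Hstar * V = U ∧
      ∀ H : Matrix (Fin p) (Fin p) ℝ, H * V = U →
        frob (Hstar - H₀) ≤ frob (H - H₀) := by
  have hd : IsUnit (Vᵀ * V).det := (Matrix.isUnit_iff_isUnit_det _).1 hV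
  have hG : (Vᵀ * V)⁻¹ * (Vᵀ * V) = 1 := Matrix.nonsing_inv_mul _ hd
  have hS : Hstar * V = U := by
    have e : Hstar * V = H₀ * (V - V * ((Vᵀ * V)⁻¹ * (Vᵀ * V)))
        + U * ((Vᵀ * V)⁻¹ * (Vᵀ * V)) := by
      rw [hHstar]
      simp only [Matrix.add_mul, Matrix.sub_mul, Matrix.mul_sub, Matrix.mul_assoc, Matrix.one_mul]
    rw [e, hG]
    simp
  refine ⟨hS, fun H hH => ?_⟩
  have hE : Hstar - H₀ = ((U - H₀ * V) * (Vᵀ * V)⁻¹) * Vᵀ := by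
    rw [hHstar]
    simp only [Matrix.sub_mul, Matrix.mul_sub, Matrix.mul_assoc, Matrix.mul_one]
    abel
  have h0 : (H - Hstar) * (Hstar - H₀)ᵀ = 0 := by
    rw [hE, Matrix.transpose_mul, Matrix.transpose_transpose, ← Matrix.mul_assoc,
      Matrix.sub_mul, hH, hS, sub_self, Matrix.zero_mul]
  have := frob_le_of_orth _ _ h0
  rwa [sub_add_sub_cancel] at this
end

section
/- Let G : ℝ^p → ℝ^p be differentiable on an open convex set D ⊆ ℝ^p containing a point x* with G(x*) = 0 and dG(x*) nonsingular, and suppose ‖dG(x) − dG(x*)‖ ≤ K‖x − x*‖^d for all x ∈ D, for constants K ≥ 0 and d > 0. Then for every x ∈ D and every p×p real matrix H, the quasi-Newton step x̄ = x − H G(x) satisfies ‖x̄ − x*‖ ≤ (‖H‖·K·‖x − x*‖^d + ‖dG(x*)‖·‖H − dG(x*)⁻¹‖)·‖x − x*‖. -/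
/-- key quasi-Newton step estimate.
If `G` is differentiable on an open convex `D ∋ x*` with `G(x*) = 0`, `dG(x*)` nonsingular
(with inverse `Ginv`), and `‖dG(x) − dG(x*)‖ ≤ K‖x − x*‖^d` on `D`, then for every `x ∈ D`
and every matrix `H` (acting as a linear map), the quasi-Newton step `x̄ = x − H G(x)`
satisfies `‖x̄ − x*‖ ≤ (‖H‖·K·‖x − x*‖^d + ‖dG(x*)‖·‖H − dG(x*)⁻¹‖)·‖x − x*‖`. -/
theorem stmt_13 {p : ℕ} {D : Set (EuclideanSpace ℝ (Fin p))}
    (hDopen : IsOpen D) (hDconv : Convex ℝ D)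
    (G : EuclideanSpace ℝ (Fin p) → EuclideanSpace ℝ (Fin p))
    (dG : EuclideanSpace ℝ (Fin p) →
      (EuclideanSpace ℝ (Fin p) →L[ℝ] EuclideanSpace ℝ (Fin p)))
    (hdiff : ∀ x ∈ D, HasFDerivAt G (dG x) x)
    (xstar : EuclideanSpace ℝ (Fin p)) (hxstar : xstar ∈ D)
    (hroot : G xstar = 0)
    (K d : ℝ) (hK : 0 ≤ K) (hd : 0 < d)
    (hHolder : ∀ x ∈ D, ‖dG x - dG xstar‖ ≤ K * ‖x - xstar‖ ^ d)
    (Ginv : EuclideanSpace ℝ (Fin p) →L[ℝ] EuclideanSpace ℝ (Fin p))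
    (hinv₁ : Ginv.comp (dG xstar) = ContinuousLinearMap.id ℝ _)
    (hinv₂ : (dG xstar).comp Ginv = ContinuousLinearMap.id ℝ _) :
    ∀ x ∈ D, ∀ H : EuclideanSpace ℝ (Fin p) →L[ℝ] EuclideanSpace ℝ (Fin p),
      ‖(x - H (G x)) - xstar‖ ≤
        (‖H‖ * K * ‖x - xstar‖ ^ d + ‖dG xstar‖ * ‖H - Ginv‖) * ‖x - xstar‖ := by
  intro x hx H
  have hsub : segment ℝ xstar x ⊆ D := hDconv.segment_subset hxstar hx
  have hmv : ‖G x - G xstar - dG xstar (x - xstar)‖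
      ≤ (K * ‖x - xstar‖ ^ d) * ‖x - xstar‖ := by
    refine Convex.norm_image_sub_le_of_norm_hasFDerivWithin_le' (s := segment ℝ xstar x)
      (f' := dG) (fun y hy => (hdiff y (hsub hy)).hasFDerivWithinAt) ?_
      (convex_segment _ _) (left_mem_segment ℝ _ _) (right_mem_segment ℝ _ _)
    intro y hy
    refine (hHolder y (hsub hy)).trans ?_
    have hle : ‖y - xstar‖ ≤ ‖x - xstar‖ := by
      obtain ⟨t, ht, rfl⟩ := (segment_eq_image' ℝ xstar x) ▸ hy
      simp only [add_sub_cancel_left, norm_smul, Real.norm_eq_abs, abs_of_nonneg ht.1]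
      exact mul_le_of_le_one_left (norm_nonneg _) ht.2
    exact mul_le_mul_of_nonneg_left (Real.rpow_le_rpow (norm_nonneg _) hle hd.le) hK
  rw [hroot, sub_zero] at hmv
  have hGA : Ginv (dG xstar (x - xstar)) = x - xstar := by
    have := congrArg (fun L => L (x - xstar)) hinv₁
    simpa only [ContinuousLinearMap.comp_apply, ContinuousLinearMap.id_apply] using this
  have key : (x - H (G x)) - xstar
      = -(H (G x - dG xstar (x - xstar))) - (H - Ginv) (dG xstar (x - xstar)) := by
    rw [ContinuousLinearMap.sub_apply, hGA, map_sub]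
    abel
  rw [key]
  have h1 : ‖H (G x - dG xstar (x - xstar))‖
      ≤ ‖H‖ * ((K * ‖x - xstar‖ ^ d) * ‖x - xstar‖) :=
    (H.le_opNorm _).trans (mul_le_mul_of_nonneg_left hmv (norm_nonneg _))
  have h2 : ‖(H - Ginv) (dG xstar (x - xstar))‖
      ≤ ‖H - Ginv‖ * (‖dG xstar‖ * ‖x - xstar‖) :=
    ((H - Ginv).le_opNorm _).trans
      (mul_le_mul_of_nonneg_left ((dG xstar).le_opNorm _) (norm_nonneg _))
  refine (norm_sub_le _ _).trans ?_
  rw [norm_neg]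
  linarith
end

section
/- For every real number y, cos(y + sin(y)) ≤ cos(y) − (1/2)·sin²(y). In particular, the MM iteration x_{k+1} = x_k + sin(x_k) for minimizing cos(x) satisfies the descent property cos(x_{k+1}) ≤ cos(x_k). -/
theorem mono_aux : Monotone (fun x : ℝ => x + Real.sin x) := by
  have hd : ∀ x : ℝ, HasDerivAt (fun x : ℝ => x + Real.sin x) (1 + Real.cos x) x := fun x =>
    (hasDerivAt_id' x).add (Real.hasDerivAt_sin x)
  refine monotone_of_deriv_nonneg (fun x => (hd x).differentiableAt) (fun x => ?_)
  rw [(hd x).deriv]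
  linarith [Real.neg_one_le_cos x]

theorem deriv_aux (x : ℝ) :
    HasDerivAt (fun x : ℝ => x ^ 2 / 2 - Real.cos x) (x + Real.sin x) x := by
  have h := ((hasDerivAt_pow 2 x).div_const 2).sub (Real.hasDerivAt_cos x)
  have e : x + Real.sin x = ((2 : ℕ) : ℝ) * x ^ (2 - 1) / 2 - -Real.sin x := by
    norm_num
  rw [e]
  exact h

theorem major_aux (x y : ℝ) :
    Real.cos x ≤ Real.cos y - Real.sin y * (x - y) + (1 / 2) * (x - y) ^ 2 := by
  have hc : Continuous (fun x : ℝ => x ^ 2 / 2 - Real.cos x) := by fun_prop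
  rcases lt_trichotomy x y with h | h | h
  · obtain ⟨c, hc1, hc2⟩ := exists_hasDerivAt_eq_slope _ _ h hc.continuousOn
      (fun z _ => deriv_aux z)
    have hm : c + Real.sin c ≤ y + Real.sin y := mono_aux hc1.2.le
    rw [eq_div_iff (by linarith)] at hc2
    nlinarith [mul_le_mul_of_nonneg_right hm (sub_nonneg.2 h.le)]
  · subst h; simp
  · obtain ⟨c, hc1, hc2⟩ := exists_hasDerivAt_eq_slope _ _ h hc.continuousOn
      (fun z _ => deriv_aux z)
    have hm : y + Real.sin y ≤ c + Real.sin c := mono_aux hc1.1.le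
    rw [eq_div_iff (by linarith)] at hc2
    nlinarith [mul_le_mul_of_nonneg_right hm (sub_nonneg.2 h.le)]

/-- descent property of the MM update `F(y) = y + sin y` for `cos`:
`cos(y + sin y) ≤ cos y − (1/2) sin² y` for all real `y`; in particular any sequence with
`x_{k+1} = x_k + sin x_k` satisfies `cos x_{k+1} ≤ cos x_k`. -/
theorem stmt_15 :
    (∀ y : ℝ, Real.cos (y + Real.sin y) ≤ Real.cos y - (1 / 2) * Real.sin y ^ 2) ∧
    (∀ x : ℕ → ℝ, (∀ k, x (k + 1) = x k + Real.sin (x k)) →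
      ∀ k, Real.cos (x (k + 1)) ≤ Real.cos (x k)) := by
  have key : ∀ y : ℝ, Real.cos (y + Real.sin y) ≤ Real.cos y - (1 / 2) * Real.sin y ^ 2 := by
    intro y
    have h := major_aux (y + Real.sin y) y
    rw [add_sub_cancel_left] at h
    linarith
  refine ⟨key, fun x hx k => ?_⟩
  rw [hx k]
  linarith [key (x k), sq_nonneg (Real.sin (x k))]
end
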